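/- Let W be a classical–quantum channel from a finite alphabet X with |X| = a into the density operators on ℂ^d. For every x^n ∈ X^n of type P, every δ > 0 and every η > 0: every η-shadow B of W_{x^n} satisfies Tr B ≥ (η − ad/δ²)·exp₂(nH(W|P) − K·d·√a·δ·√n), where K = 2 log₂(e)/e and H(W|P) = Σ_x P(x)H(W_x). -/

import Mathlib

open Matrix BigOperators Finset
open scoped Classical ComplexOrder

noncomputable section

/-- Square complex matrices of size `d` (operators on `ℂ^d`). -/
abbrev Mat (d : ℕ) := Matrix (Fin d) (Fin d) ℂ

/-- Operators on the `n`-fold tensor power `(ℂ^d)^{⊗n}`, indexed by `Fin n → Fin d`. -/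
abbrev MatPow (d n : ℕ) := Matrix (Fin n → Fin d) (Fin n → Fin d) ℂ

/-- Tensor product `A 0 ⊗ A 1 ⊗ ⋯ ⊗ A (n-1)` of a family of `d × d` matrices. -/
def tensorPow {d n : ℕ} (A : Fin n → Mat d) : MatPow d n :=
  Matrix.of fun j k => ∏ i, A i (j i) (k i)

/-- Exponential to base 2. -/
def exp2 (t : ℝ) : ℝ := (2 : ℝ) ^ t

/-- `P` is a probability distribution on the finite set `X`. -/
def IsProbDist {X : Type*} [Fintype X] (P : X → ℝ) : Prop :=
  (∀ x, 0 ≤ P x) ∧ ∑ x, P x = 1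

/-- `ρ` is a density operator (a state): positive semidefinite with trace one. -/
def IsState {ι : Type*} [Fintype ι] [DecidableEq ι] (ρ : Matrix ι ι ℂ) : Prop :=
  ρ.PosSemidef ∧ ρ.trace = 1

/-- `N(x|x^n)`: number of occurrences of the letter `x` in the sequence `xs`. -/
def countIn {X : Type*} {n : ℕ} (x : X) (xs : Fin n → X) : ℕ :=
  (Finset.univ.filter fun i => xs i = x).card

/-- The variance-typical set `T^n_{P,δ}`. -/
def typicalSet {X : Type*} [Fintype X] (n : ℕ) (P : X → ℝ) (δ : ℝ) :
    Finset (Fin n → X) :=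
  Finset.univ.filter fun xs => ∀ x : X,
    |(countIn x xs : ℝ) - n * P x| ≤ δ * Real.sqrt n * Real.sqrt (P x * (1 - P x))

/-- Product (i.i.d.) probability `P^{⊗n}(A)` of a set `A` of sequences. -/
def prodProb {X : Type*} [Fintype X] {n : ℕ} (P : X → ℝ) (A : Finset (Fin n → X)) : ℝ :=
  ∑ xs ∈ A, ∏ i, P (xs i)

/-- Shannon entropy to base 2. -/
def shannonEntropy {X : Type*} [Fintype X] (P : X → ℝ) : ℝ :=
  -∑ x, P x * Real.logb 2 (P x)

/-- von Neumann entropy to base 2, `H(ρ) = -Tr(ρ log₂ ρ)`, via the eigenvalues. -/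
def vnEntropy {d : ℕ} (ρ : Mat d) : ℝ :=
  if h : ρ.IsHermitian then -∑ i, h.eigenvalues i * Real.logb 2 (h.eigenvalues i) else 0

/-- The constant `K = 2 log₂(e) / e`. -/
def Kconst : ℝ := 2 * Real.logb 2 (Real.exp 1) / Real.exp 1

/-- A diagonalization `ρ = Σ_j R j • π j` into one-dimensional mutually orthogonal
eigenprojectors, with eigenvalue list `R` a probability distribution. -/
def IsDiagonalization {d : ℕ} (ρ : Mat d) (R : Fin d → ℝ) (π : Fin d → Mat d) : Prop :=
  (∀ j, (π j).PosSemidef) ∧ (∀ j, π j * π j = π j) ∧ (∀ j, (π j).trace = 1) ∧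
    (∀ j k, j ≠ k → π j * π k = 0) ∧ (∑ j, π j = 1) ∧
    ρ = ∑ j, (R j : ℂ) • π j ∧ IsProbDist R

/-- The variance-typical projector `Π^n_{ρ,δ}` of a state with fixed diagonalization
`(R, π)`. -/
def typicalProj {d : ℕ} (n : ℕ) (R : Fin d → ℝ) (π : Fin d → Mat d) (δ : ℝ) : MatPow d n :=
  ∑ js ∈ typicalSet n R δ, tensorPow fun i => π (js i)

/-- `B` is an `η`-shadow of the state `σ`: `0 ≤ B ≤ 1` and `Tr(σB) ≥ η`. -/
def IsShadow {ι : Type*} [Fintype ι] [DecidableEq ι] (σ B : Matrix ι ι ℂ) (η : ℝ) : Prop :=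
  B.PosSemidef ∧ ((1 : Matrix ι ι ℂ) - B).PosSemidef ∧ η ≤ (Matrix.trace (σ * B)).re

/-- Average state `PW = Σ_x P(x) W_x` of a cq-channel under input distribution `P`. -/
def avgState {X : Type*} [Fintype X] {d : ℕ} (P : X → ℝ) (W : X → Mat d) : Mat d :=
  ∑ x, (P x : ℂ) • W x

/-- Conditional von Neumann entropy `H(W|P) = Σ_x P(x) H(W_x)`. -/
def condEntropy {X : Type*} [Fintype X] {d : ℕ} (P : X → ℝ) (W : X → Mat d) : ℝ :=
  ∑ x, P x * vnEntropy (W x)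

/-- Mutual information `I(P;W) = H(PW) − H(W|P)`. -/
def mutualInfo {X : Type*} [Fintype X] {d : ℕ} (P : X → ℝ) (W : X → Mat d) : ℝ :=
  vnEntropy (avgState P W) - condEntropy P W

/-- Capacity `C(W) = max_P I(P;W)`. -/
def capacity {X : Type*} [Fintype X] {d : ℕ} (W : X → Mat d) : ℝ :=
  sSup {c | ∃ P : X → ℝ, IsProbDist P ∧ c = mutualInfo P W}

/-- `(f, D)` (with message set `M` inside the outcome index set `M'`) is an
`(n,λ)`-code for the cq-channel `W`: the `D m` are positive semidefinite, sum to the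
identity, and each message is decoded correctly with probability at least `1 - λ`. -/
def IsCode {X : Type*} [Fintype X] {d n : ℕ} (W : X → Mat d) (lam : ℝ)
    {M' : Type*} [Fintype M'] (M : Finset M') (f : M' → Fin n → X)
    (D : M' → MatPow d n) : Prop :=
  (∀ m, (D m).PosSemidef) ∧ (∑ m, D m = 1) ∧
    ∀ m ∈ M, 1 - lam ≤ (Matrix.trace (tensorPow (fun i => W (f m i)) * D m)).re

/-- `N(n,λ)`: maximal size of an `(n,λ)`-code for `W`. -/
def maxCodeSize {X : Type*} [Fintype X] (d : ℕ) (W : X → Mat d) (n : ℕ) (lam : ℝ) : ℕ :=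
  sSup {k | ∃ (M' : Type) (_ : Fintype M') (M : Finset M') (f : M' → Fin n → X)
    (D : M' → MatPow d n), IsCode W lam M f D ∧ M.card = k}

/-- Trace norm `‖A‖₁ = Tr|A|`: the sum of the singular values. -/
def traceNorm {ι : Type*} [Fintype ι] [DecidableEq ι] (A : Matrix ι ι ℂ) : ℝ :=
  ∑ i, Real.sqrt ((Matrix.posSemidef_conjTranspose_mul_self A).1.eigenvalues i)

/-- Trace distance `D(ρ,σ) = ½‖ρ−σ‖₁`. -/
def traceDist {ι : Type*} [Fintype ι] [DecidableEq ι] (ρ σ : Matrix ι ι ℂ) : ℝ :=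
  traceNorm (ρ - σ) / 2

/-- (Pure-state) fidelity `F(ρ,σ) = Tr(ρσ)`. -/
def fidelity {ι : Type*} [Fintype ι] [DecidableEq ι] (ρ σ : Matrix ι ι ℂ) : ℝ :=
  (Matrix.trace (ρ * σ)).re

/-- A pure state: the rank-one orthogonal projector `|ψ⟩⟨ψ|` onto the span of a
unit vector `ψ`. -/
def IsPureState {ι : Type*} [Fintype ι] (ρ : Matrix ι ι ℂ) : Prop :=
  ∃ ψ : ι → ℂ, (∑ i, star (ψ i) * ψ i) = 1 ∧ ρ = Matrix.vecMulVec ψ (star ψ)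

/-- The set of eigenvalue-index sequences `js` that are variance-typical, with
constant `δ`, for the distribution `q x` on each block `I_x = {i : xs i = x}`. -/
def condTypicalSet {X : Type*} [Fintype X] {n d : ℕ} (xs : Fin n → X)
    (q : X → Fin d → ℝ) (δ : ℝ) : Finset (Fin n → Fin d) :=
  Finset.univ.filter fun js => ∀ (x : X) (k : Fin d),
    |((Finset.univ.filter fun i => xs i = x ∧ js i = k).card : ℝ) - (countIn x xs : ℝ) * q x k|
      ≤ δ * Real.sqrt (countIn x xs) * Real.sqrt (q x k * (1 - q x k))

/-- Conditional variance-typical projector `Π^n_{W,δ}(x^n) = ⊗_{x∈X} Π^{I_x}_{W_x,δ}`,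
with respect to fixed diagonalizations `W_x = Σ_j (q x j) • (π x j)`. -/
def condTypicalProj {X : Type*} [Fintype X] {d : ℕ} {n : ℕ} (xs : Fin n → X)
    (q : X → Fin d → ℝ) (π : X → Fin d → Mat d) (δ : ℝ) : MatPow d n :=
  ∑ js ∈ condTypicalSet xs q δ, tensorPow fun i => π (xs i) (js i)

theorem tensorPow_mul {d n : ℕ} (A C : Fin n → Mat d) :
    tensorPow A * tensorPow C = tensorPow fun i => A i * C i := by
  ext j k
  simp only [tensorPow, Matrix.mul_apply, Matrix.of_apply]
  rw [Fintype.prod_sum]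
  simp only [Finset.prod_mul_distrib]

theorem tensorPow_conjTranspose {d n : ℕ} (A : Fin n → Mat d) :
    (tensorPow A)ᴴ = tensorPow fun i => (A i)ᴴ := by
  ext j k
  simp [tensorPow, Matrix.conjTranspose_apply]

theorem tensorPow_diagonal {d n : ℕ} (v : Fin n → Fin d → ℂ) :
    tensorPow (fun i => Matrix.diagonal (v i)) =
      Matrix.diagonal (fun j : Fin n → Fin d => ∏ i, v i (j i)) := by
  ext j k
  simp only [tensorPow, Matrix.of_apply]
  by_cases h : j = k
  · subst h; simp
  · rw [Matrix.diagonal_apply_ne _ h]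
    obtain ⟨i, hi⟩ := Function.ne_iff.mp h
    exact Finset.prod_eq_zero (Finset.mem_univ i) (Matrix.diagonal_apply_ne _ hi)

theorem tensorPow_one {d n : ℕ} :
    tensorPow (fun _ : Fin n => (1 : Mat d)) = 1 := by
  have h := tensorPow_diagonal (n := n) (fun _ => fun _ : Fin d => (1 : ℂ))
  simpa using h

/-- `q (log q)² ≤ (2/e)²` on `[0,1]`. -/
theorem mul_log_sq_le (q : ℝ) (h0 : 0 ≤ q) (h1 : q ≤ 1) :
    q * (Real.log q) ^ 2 ≤ (2 / Real.exp 1) ^ 2 := by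
  rcases h0.eq_or_lt with h | h
  · rw [← h]; simp; positivity
  set u := Real.sqrt q with hu
  have hu0 : 0 < u := Real.sqrt_pos.mpr h
  have hq : q = u ^ 2 := (Real.sq_sqrt h0).symm
  have hu1 : u ≤ 1 := Real.sqrt_le_one.mpr h1
  have he : 0 < Real.exp 1 := Real.exp_pos 1
  have hl : Real.log u ≤ 0 := Real.log_nonpos hu0.le hu1
  have h2 := Real.one_sub_inv_le_log_of_pos (mul_pos hu0 he)
  rw [Real.log_mul hu0.ne' he.ne', Real.log_exp] at h2
  have h3 : -(u * Real.log u) ≤ 1 / Real.exp 1 := by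
    have h4 := mul_le_mul_of_nonneg_left h2 hu0.le
    have h5 : u * (1 - (u * Real.exp 1)⁻¹) = u - 1 / Real.exp 1 := by field_simp
    rw [h5] at h4
    linarith
  have h6 : 0 ≤ -(u * Real.log u) := by nlinarith
  rw [hq, Real.log_pow]
  have h7 := pow_le_pow_left₀ h6 h3 2
  calc u ^ 2 * ((2 : ℕ) * Real.log u) ^ 2 = 4 * (-(u * Real.log u)) ^ 2 := by push_cast; ring
    _ ≤ 4 * (1 / Real.exp 1) ^ 2 := by linarith
    _ = _ := by ring

theorem mul_logb_sq_le (q : ℝ) (h0 : 0 ≤ q) (h1 : q ≤ 1) :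
    q * (Real.logb 2 q) ^ 2 ≤ Kconst ^ 2 := by
  have h := mul_log_sq_le q h0 h1
  have hl : 0 < Real.log 2 := Real.log_pos (by norm_num)
  have e1 : q * (Real.logb 2 q) ^ 2 = q * (Real.log q) ^ 2 / (Real.log 2) ^ 2 := by
    unfold Real.logb; ring
  have e2 : Kconst ^ 2 = (2 / Real.exp 1) ^ 2 / (Real.log 2) ^ 2 := by
    unfold Kconst Real.logb; rw [Real.log_exp]; ring
  rw [e1, e2]
  gcongr

/-- Second moment of a sum of independent centered variables. -/
theorem second_moment {d n : ℕ} (q Y : Fin n → Fin d → ℝ)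
    (hq : ∀ i, ∑ k, q i k = 1) (hY : ∀ i, ∑ k, q i k * Y i k = 0) :
    ∑ j : Fin n → Fin d, (∏ i, q i (j i)) * (∑ i, Y i (j i)) ^ 2 =
      ∑ i, ∑ k, q i k * (Y i k) ^ 2 := by
  have key : ∀ a b : Fin n, ∑ j : Fin n → Fin d, (∏ i, q i (j i)) * (Y a (j a) * Y b (j b)) =
      if a = b then ∑ k, q a k * (Y a k) ^ 2 else 0 := by
    intro a b
    have e : ∀ j : Fin n → Fin d, (∏ i, q i (j i)) * (Y a (j a) * Y b (j b)) =
        ∏ i, (q i (j i) * ((if i = a then Y i (j i) else 1) * (if i = b then Y i (j i) else 1))) := by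
      intro j
      rw [Finset.prod_mul_distrib, Finset.prod_mul_distrib]
      simp
    simp_rw [e]
    rw [← Fintype.prod_sum (fun i k => q i k *
      ((if i = a then Y i k else 1) * (if i = b then Y i k else 1)))]
    by_cases hab : a = b
    · subst hab
      rw [if_pos rfl, Finset.prod_eq_single a]
      · simp [sq]
      · intro c _ hc
        simp [hc, hq]
      · simp
    · rw [if_neg hab]
      apply Finset.prod_eq_zero (Finset.mem_univ a)
      simp [hab, hY]
  calc _ = ∑ j : Fin n → Fin d, ∑ a, ∑ b, (∏ i, q i (j i)) * (Y a (j a) * Y b (j b)) := by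
        refine Finset.sum_congr rfl fun j _ => ?_
        rw [sq, Finset.sum_mul_sum, Finset.mul_sum]
        simp_rw [Finset.mul_sum]
    _ = ∑ a, ∑ b, ∑ j : Fin n → Fin d, (∏ i, q i (j i)) * (Y a (j a) * Y b (j b)) := by
        rw [Finset.sum_comm]
        refine Finset.sum_congr rfl fun a _ => ?_
        rw [Finset.sum_comm]
    _ = _ := by simp [key]

/-- The classical core: a fractional test with large weight has large total mass. -/
theorem classical_core {d n : ℕ} (q : Fin n → Fin d → ℝ) (hq0 : ∀ i k, 0 ≤ q i k)
    (hq : ∀ i, ∑ k, q i k = 1) (b : (Fin n → Fin d) → ℝ) (hb0 : ∀ j, 0 ≤ b j)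
    (hb1 : ∀ j, b j ≤ 1) (η t : ℝ) (ht : 0 < t)
    (hη : η ≤ ∑ j : Fin n → Fin d, (∏ i, q i (j i)) * b j) :
    (η - n * d * Kconst ^ 2 / t ^ 2) *
      exp2 ((∑ i, -∑ k, q i k * Real.logb 2 (q i k)) - t) ≤ ∑ j, b j := by
  set Hs : ℝ := ∑ i, -∑ k, q i k * Real.logb 2 (q i k) with hHs
  have hq1 : ∀ i k, q i k ≤ 1 := fun i k => by
    rw [← hq i]; exact Finset.single_le_sum (fun k _ => hq0 i k) (Finset.mem_univ k)
  set Y : Fin n → Fin d → ℝ := fun i k =>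
    Real.logb 2 (q i k) - ∑ l, q i l * Real.logb 2 (q i l) with hYd
  have hY : ∀ i, ∑ k, q i k * Y i k = 0 := by
    intro i
    simp only [hYd, mul_sub, Finset.sum_sub_distrib]
    rw [← Finset.sum_mul, hq i]; ring
  have hV : ∀ i, ∑ k, q i k * (Y i k) ^ 2 ≤ d * Kconst ^ 2 := by
    intro i
    set m := ∑ l, q i l * Real.logb 2 (q i l) with hm
    have e : ∑ k, q i k * (Y i k) ^ 2 = (∑ k, q i k * (Real.logb 2 (q i k)) ^ 2) - m ^ 2 := by
      have e1 : ∀ k, q i k * (Y i k) ^ 2 = q i k * (Real.logb 2 (q i k)) ^ 2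
          - 2 * m * (q i k * Real.logb 2 (q i k)) + m ^ 2 * q i k := by
        intro k; simp only [hYd]; rw [← hm]; ring
      simp_rw [e1]
      rw [Finset.sum_add_distrib, Finset.sum_sub_distrib, ← Finset.mul_sum, ← Finset.mul_sum,
        ← hm, hq i]
      ring
    rw [e]
    have h2 : ∑ k, q i k * (Real.logb 2 (q i k)) ^ 2 ≤ ∑ _k : Fin d, Kconst ^ 2 :=
      Finset.sum_le_sum fun k _ => mul_logb_sq_le _ (hq0 i k) (hq1 i k)
    simp at h2
    nlinarith [sq_nonneg m]
  have hM : ∑ j : Fin n → Fin d, (∏ i, q i (j i)) * (∑ i, Y i (j i)) ^ 2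
      ≤ n * d * Kconst ^ 2 := by
    rw [second_moment q Y hq hY]
    calc _ ≤ ∑ _i : Fin n, (d * Kconst ^ 2 : ℝ) := Finset.sum_le_sum fun i _ => hV i
      _ = _ := by simp; ring
  have hQ0 : ∀ j : Fin n → Fin d, 0 ≤ ∏ i, q i (j i) := fun j =>
    Finset.prod_nonneg fun i _ => hq0 i _
  have hYs : ∀ j : Fin n → Fin d, ∑ i, Y i (j i) = (∑ i, Real.logb 2 (q i (j i))) + Hs := by
    intro j
    simp only [hYd, hHs, Finset.sum_sub_distrib, Finset.sum_neg_distrib]; ring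
  have hpt : ∀ j : Fin n → Fin d, (∏ i, q i (j i)) * b j ≤
      exp2 (t - Hs) * b j + ((∏ i, q i (j i)) * (∑ i, Y i (j i)) ^ 2) / t ^ 2 := by
    intro j
    have hexp : 0 < exp2 (t - Hs) := Real.rpow_pos_of_pos (by norm_num) _
    by_cases hj : ∑ i, Y i (j i) ≤ t
    · have h1 : (∏ i, q i (j i)) ≤ exp2 (t - Hs) := by
        by_cases hz : ∃ i, q i (j i) = 0
        · obtain ⟨i, hi⟩ := hz
          rw [Finset.prod_eq_zero (Finset.mem_univ i) hi]; exact hexp.le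
        · push Not at hz
          have hpos : ∀ i, 0 < q i (j i) := fun i => lt_of_le_of_ne (hq0 i _) (hz i).symm
          have e : (∏ i, q i (j i)) = (2 : ℝ) ^ (∑ i, Real.logb 2 (q i (j i))) := by
            rw [Real.rpow_sum_of_pos (by norm_num)]
            refine Finset.prod_congr rfl fun i _ => ?_
            rw [Real.rpow_logb (by norm_num) (by norm_num) (hpos i)]
          rw [e]
          unfold exp2
          apply Real.rpow_le_rpow_of_exponent_le (by norm_num)
          have := hYs j
          linarith
      have h2 := mul_le_mul_of_nonneg_right h1 (hb0 j)
      have h3 : 0 ≤ ((∏ i, q i (j i)) * (∑ i, Y i (j i)) ^ 2) / t ^ 2 := by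
        have := hQ0 j
        positivity
      linarith
    · push Not at hj
      have h1 : (∏ i, q i (j i)) * b j ≤ ∏ i, q i (j i) :=
        mul_le_of_le_one_right (hQ0 j) (hb1 j)
      have h2 : (∏ i, q i (j i)) ≤ ((∏ i, q i (j i)) * (∑ i, Y i (j i)) ^ 2) / t ^ 2 := by
        rw [le_div_iff₀ (by positivity)]
        exact mul_le_mul_of_nonneg_left (pow_le_pow_left₀ ht.le hj.le 2) (hQ0 j)
      have h3 := mul_nonneg hexp.le (hb0 j)
      linarith
  have hsum := Finset.sum_le_sum fun j (_ : j ∈ Finset.univ) => hpt j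
  rw [Finset.sum_add_distrib, ← Finset.mul_sum, ← Finset.sum_div] at hsum
  have hM' := div_le_div_of_nonneg_right hM (sq_nonneg t)
  have h1 : η - n * d * Kconst ^ 2 / t ^ 2 ≤ exp2 (t - Hs) * ∑ j, b j := by linarith
  have hexp : 0 < exp2 (Hs - t) := Real.rpow_pos_of_pos (by norm_num) _
  have h2 := mul_le_mul_of_nonneg_right h1 hexp.le
  have h3 : exp2 (t - Hs) * exp2 (Hs - t) = 1 := by
    unfold exp2; rw [← Real.rpow_add (by norm_num)]; simp
  calc _ ≤ _ := h2
    _ = (exp2 (t - Hs) * exp2 (Hs - t)) * ∑ j, b j := by ring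
    _ = _ := by rw [h3, one_mul]

/-- **Lemma 4, part 4 (Shadow bound for `W_{x^n}`).** For `x^n` of type `P`, every
`η`-shadow `B` of `W_{x^n}` satisfies
`Tr B ≥ (η − ad/δ²) exp₂(nH(W|P) − Kd√a δ√n)`, with `K = 2 log₂(e)/e`. -/
theorem shadow_bound_channel {X : Type} [Fintype X] {d : ℕ}
    (W : X → Mat d) (hW : ∀ x, IsState (W x))
    (n : ℕ) (hn : 0 < n) (xs : Fin n → X) (P : X → ℝ) (hP : IsProbDist P)
    (htype : ∀ x, (countIn x xs : ℝ) = n * P x)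
    (δ η : ℝ) (hδ : 0 < δ) (hη : 0 < η)
    (B : MatPow d n) (hB : IsShadow (tensorPow fun i => W (xs i)) B η) :
    (η - (Fintype.card X : ℝ) * d / δ ^ 2) *
        exp2 ((n : ℝ) * condEntropy P W -
          Kconst * d * Real.sqrt (Fintype.card X) * δ * Real.sqrt n)
      ≤ (Matrix.trace B).re := by
  obtain ⟨hB0, hB1, hBη⟩ := hB
  have hH : ∀ x, (W x).IsHermitian := fun x => (hW x).1.1
  set q : Fin n → Fin d → ℝ := fun i => (hH (xs i)).eigenvalues with hqd
  set U : Fin n → Mat d := fun i => ((hH (xs i)).eigenvectorUnitary : Mat d) with hUd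
  have hq0 : ∀ i k, 0 ≤ q i k := fun i k => (hW (xs i)).1.eigenvalues_nonneg k
  have hq : ∀ i, ∑ k, q i k = 1 := by
    intro i
    have h1 := (hH (xs i)).trace_eq_sum_eigenvalues
    rw [(hW (xs i)).2] at h1
    have h2 : ((∑ k, q i k : ℝ) : ℂ) = 1 := by rw [h1]; simp [hqd]
    exact_mod_cast h2
  have hUU : ∀ i, (U i)ᴴ * U i = 1 := fun i =>
    Unitary.coe_star_mul_self (hH (xs i)).eigenvectorUnitary
  have hUU' : ∀ i, U i * (U i)ᴴ = 1 := fun i =>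
    Unitary.coe_mul_star_self (hH (xs i)).eigenvectorUnitary
  have hspec : ∀ i, W (xs i) = U i * Matrix.diagonal (fun k => ((q i k : ℝ) : ℂ)) * (U i)ᴴ := by
    intro i
    have h := (hH (xs i)).spectral_theorem
    rw [Unitary.conjStarAlgAut_apply] at h
    exact h
  set V : MatPow d n := tensorPow U with hV
  have hVV : Vᴴ * V = 1 := by
    rw [hV, tensorPow_conjTranspose, tensorPow_mul]; simp_rw [hUU]; exact tensorPow_one
  have hVV' : V * Vᴴ = 1 := by
    rw [hV, tensorPow_conjTranspose, tensorPow_mul]; simp_rw [hUU']; exact tensorPow_one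
  have hσ : (tensorPow fun i => W (xs i)) =
      V * Matrix.diagonal (fun j : Fin n → Fin d => ∏ i, ((q i (j i) : ℝ) : ℂ)) * Vᴴ := by
    rw [hV, tensorPow_conjTranspose, ← tensorPow_diagonal (fun i k => ((q i k : ℝ) : ℂ)),
      tensorPow_mul, tensorPow_mul]
    congr 1; funext i; exact hspec i
  set B' : MatPow d n := Vᴴ * B * V with hB'
  have hB'0 : B'.PosSemidef := hB0.conjTranspose_mul_mul_same V
  have hB'1 : (1 - B').PosSemidef := by
    have h := hB1.conjTranspose_mul_mul_same V
    rw [mul_sub, sub_mul, mul_one, hVV] at h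
    exact h
  have htr : B'.trace = B.trace := by
    rw [hB', Matrix.trace_mul_comm, ← mul_assoc, hVV', one_mul]
  have hb0 : ∀ j, 0 ≤ (B' j j).re := fun j => (Complex.le_def.mp (hB'0.diag_nonneg (i := j))).1
  have hb1 : ∀ j, (B' j j).re ≤ 1 := fun j => by
    have h := (Complex.le_def.mp (hB'1.diag_nonneg (i := j))).1
    simp at h
    exact h
  have hη' : η ≤ ∑ j : Fin n → Fin d, (∏ i, q i (j i)) * (B' j j).re := by
    have e : ((tensorPow fun i => W (xs i)) * B).trace =
        (Matrix.diagonal (fun j : Fin n → Fin d => ∏ i, ((q i (j i) : ℝ) : ℂ)) * B').trace := by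
      rw [hσ, hB', mul_assoc, mul_assoc, Matrix.trace_mul_comm]
      simp only [mul_assoc]
    rw [e] at hBη
    refine hBη.trans (le_of_eq ?_)
    simp only [Matrix.trace, Matrix.diag_apply, Matrix.diagonal_mul, Complex.re_sum]
    refine Finset.sum_congr rfl fun j _ => ?_
    rw [← Complex.ofReal_prod, Complex.re_ofReal_mul]
  have hd : 0 < d := by
    rcases Nat.eq_zero_or_pos d with h | h
    · subst h
      have := hq ⟨0, hn⟩
      simp at this
    · exact h
  have ha : 0 < Fintype.card X := Fintype.card_pos_iff.mpr ⟨xs ⟨0, hn⟩⟩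
  have hK : 0 < Kconst := by
    unfold Kconst
    have : 0 < Real.logb 2 (Real.exp 1) :=
      Real.logb_pos (by norm_num) (by simp)
    positivity
  have hn' : (0 : ℝ) < n := by exact_mod_cast hn
  have hd' : (1 : ℝ) ≤ d := by exact_mod_cast hd
  have ha' : (1 : ℝ) ≤ Fintype.card X := by exact_mod_cast ha
  have hcore := classical_core q hq0 hq (fun j => (B' j j).re) hb0 hb1 η
    (Kconst * d * Real.sqrt (Fintype.card X) * δ * Real.sqrt n) (by positivity) hη'
  have hent : (∑ i, -∑ k, q i k * Real.logb 2 (q i k)) = n * condEntropy P W := by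
    have e1 : ∀ i, (-∑ k, q i k * Real.logb 2 (q i k)) = vnEntropy (W (xs i)) := by
      intro i
      unfold vnEntropy
      rw [dif_pos (hH (xs i))]
    simp_rw [e1]
    unfold condEntropy
    rw [Finset.mul_sum]
    have e2 : ∀ x, (n : ℝ) * (P x * vnEntropy (W x)) =
        ∑ i ∈ Finset.univ.filter (fun i => xs i = x), vnEntropy (W (xs i)) := by
      intro x
      rw [← mul_assoc, ← htype x]
      have : ∑ i ∈ Finset.univ.filter (fun i => xs i = x), vnEntropy (W (xs i)) =
          ∑ i ∈ Finset.univ.filter (fun i => xs i = x), vnEntropy (W x) :=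
        Finset.sum_congr rfl fun i hi => by rw [(Finset.mem_filter.mp hi).2]
      rw [this, Finset.sum_const, nsmul_eq_mul]
      rfl
    simp_rw [e2]
    exact (Finset.sum_fiberwise Finset.univ xs _).symm
  rw [hent] at hcore
  have htB : ∑ j, (B' j j).re = (Matrix.trace B).re := by
    rw [← htr]; simp [Matrix.trace]
  rw [htB] at hcore
  refine le_trans (mul_le_mul_of_nonneg_right ?_
    (Real.rpow_nonneg (by norm_num) _)) hcore
  have h1 : (n : ℝ) * d * Kconst ^ 2 /
      (Kconst * d * Real.sqrt (Fintype.card X) * δ * Real.sqrt n) ^ 2 =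
      1 / (d * Fintype.card X * δ ^ 2) := by
    simp only [mul_pow]
    rw [Real.sq_sqrt (by positivity), Real.sq_sqrt (by positivity)]
    field_simp
  rw [h1]
  have h2 : 1 / (d * Fintype.card X * δ ^ 2) ≤ (Fintype.card X : ℝ) * d / δ ^ 2 := by
    rw [div_le_div_iff₀ (by positivity) (by positivity)]
    have h3 : (1 : ℝ) ≤ (Fintype.card X : ℝ) * d := one_le_mul_of_one_le_of_one_le ha' hd'
    nlinarith [mul_le_mul h3 h3 zero_le_one (zero_le_one.trans h3), sq_nonneg δ]
  linarith
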